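/- Let X be a set, 𝒞 a finite set of classes with at least two elements, ρ > 0, and let D be a probability distribution on X × 𝒞 with X-marginal D_X (all integrands measurable). Then for any two scoring functions f, f' : X × 𝒞 → ℝ, the margin disparity is bounded by the sum of margin errors: disp_{D_X}^{(ρ)}(f', f) ≤ err_D^{(ρ)}(f') + err_D^{(ρ)}(f). -/

import Mathlib

open MeasureTheory Real

/-- Ramp function `Φ^ρ`. -/
noncomputable def ramp (ρ t : ℝ) : ℝ := if t < 0 then 1 else if t ≤ ρ then 1 - t / ρ else 0

/-- Margin `ρ_f(x,c) = f(x,c) − max_{c'≠c} f(x,c')`. -/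
noncomputable def margin {X C : Type*} [Fintype C] [DecidableEq C] [Nontrivial C]
    (f : X × C → ℝ) (x : X) (c : C) : ℝ :=
  f (x, c) - (Finset.univ.erase c).sup'
    (by obtain ⟨b, hb⟩ := exists_ne c
        exact ⟨b, Finset.mem_erase.2 ⟨hb, Finset.mem_univ b⟩⟩)
    (fun c' => f (x, c'))

section Ramp

variable {ρ : ℝ}

theorem ramp_nonneg (t : ℝ) : 0 ≤ ramp ρ t := by
  unfold ramp
  split_ifs with ht htρ
  · exact zero_le_one
  · have hρ : 0 ≤ ρ := (not_lt.1 ht).trans htρ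
    exact sub_nonneg.2 (div_le_one_of_le₀ htρ hρ)
  · exact le_rfl

theorem ramp_le_one (t : ℝ) : ramp ρ t ≤ 1 := by
  unfold ramp
  split_ifs with ht htρ
  · exact le_rfl
  · have ht₀ : 0 ≤ t := not_lt.1 ht
    exact sub_le_self 1 (div_nonneg ht₀ (ht₀.trans htρ))
  · exact zero_le_one

theorem ramp_of_nonpos (hρ : 0 ≤ ρ) {t : ℝ} (ht : t ≤ 0) : ramp ρ t = 1 := by
  rcases ht.lt_or_eq with ht | rfl
  · exact if_pos ht
  · simp [ramp, hρ]

end Ramp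

section Margin

variable {X C : Type*} [Fintype C] [DecidableEq C] [Nontrivial C]

theorem margin_le_sub (f : X × C → ℝ) (x : X) {c c' : C} (hc : c' ≠ c) :
    margin f x c ≤ f (x, c) - f (x, c') :=
  sub_le_sub_left
    (Finset.le_sup' (fun b => f (x, b)) (Finset.mem_erase.2 ⟨hc, Finset.mem_univ c'⟩)) _

theorem margin_nonpos_of_le {f : X × C → ℝ} {x : X} {c c' : C} (hc : c' ≠ c)
    (hf : f (x, c) ≤ f (x, c')) : margin f x c ≤ 0 :=
  (margin_le_sub f x hc).trans (sub_nonpos.2 hf)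

theorem ramp_margin_le_add {ρ : ℝ} (hρ : 0 ≤ ρ) {f : X × C → ℝ} (f' : X × C → ℝ) {x : X}
    {c y : C} (hf : f (x, y) ≤ f (x, c)) :
    ramp ρ (margin f' x c) ≤ ramp ρ (margin f' x y) + ramp ρ (margin f x y) := by
  rcases eq_or_ne c y with rfl | hcy
  · exact le_add_of_nonneg_right (ramp_nonneg _)
  · calc
      ramp ρ (margin f' x c) ≤ 1 := ramp_le_one _
      _ = ramp ρ (margin f x y) := (ramp_of_nonpos hρ (margin_nonpos_of_le hcy hf)).symm
      _ ≤ ramp ρ (margin f' x y) + ramp ρ (margin f x y) :=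
        le_add_of_nonneg_left (ramp_nonneg _)

end Margin

theorem stmt2_general {X C : Type*} [MeasurableSpace X] [MeasurableSpace C]
    [Fintype C] [DecidableEq C] [Nontrivial C]
    {ρ : ℝ} (hρ : 0 < ρ) {D : Measure (X × C)} {f f' : X × C → ℝ}
    {h : X → C} (hh : ∀ x c, f (x, c) ≤ f (x, h x))
    (hdisp : Integrable (fun x => ramp ρ (margin f' x (h x))) (D.map Prod.fst))
    (herr' : Integrable (fun p => ramp ρ (margin f' p.1 p.2)) D)
    (herr : Integrable (fun p => ramp ρ (margin f p.1 p.2)) D) :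
    (∫ x, ramp ρ (margin f' x (h x)) ∂(D.map Prod.fst)) ≤
      (∫ p, ramp ρ (margin f' p.1 p.2) ∂D) + ∫ p, ramp ρ (margin f p.1 p.2) ∂D :=
  calc
    ∫ x, ramp ρ (margin f' x (h x)) ∂(D.map Prod.fst)
        = ∫ p, ramp ρ (margin f' p.1 (h p.1)) ∂D :=
      integral_map measurable_fst.aemeasurable hdisp.aestronglyMeasurable
    _ ≤ ∫ p, (ramp ρ (margin f' p.1 p.2) + ramp ρ (margin f p.1 p.2)) ∂D :=
      integral_mono (hdisp.comp_measurable measurable_fst) (herr'.add herr)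
        fun p => ramp_margin_le_add hρ.le f' (hh p.1 p.2)
    _ = (∫ p, ramp ρ (margin f' p.1 p.2) ∂D) + ∫ p, ramp ρ (margin f p.1 p.2) ∂D :=
      integral_add herr' herr

/-- `disp_{D_X}^{(ρ)}(f', f) ≤ err_D^{(ρ)}(f') + err_D^{(ρ)}(f)`,
where `am` is the fixed argmax tie-breaking rule inducing the classifier `h_f = am f`. -/
theorem stmt2 {X C : Type*} [MeasurableSpace X] [MeasurableSpace C]
    [Fintype C] [DecidableEq C] [Nontrivial C]
    (ρ : ℝ) (hρ : 0 < ρ)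
    (am : (X × C → ℝ) → X → C)
    (ham : ∀ g : X × C → ℝ, ∀ x : X, ∀ c : C, g (x, c) ≤ g (x, am g x))
    (D : Measure (X × C)) [IsProbabilityMeasure D]
    (f f' : X × C → ℝ)
    -- all integrands measurable (hence integrable, being `[0,1]`-valued)
    (hdisp : Integrable (fun x => ramp ρ (margin f' x (am f x))) (D.map Prod.fst))
    (herr' : Integrable (fun p => ramp ρ (margin f' p.1 p.2)) D)
    (herr : Integrable (fun p => ramp ρ (margin f p.1 p.2)) D) :
    (∫ x, ramp ρ (margin f' x (am f x)) ∂(D.map Prod.fst)) ≤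
      (∫ p, ramp ρ (margin f' p.1 p.2) ∂D) + ∫ p, ramp ρ (margin f p.1 p.2) ∂D :=
  stmt2_general hρ (ham f) hdisp herr' herr
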